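/- Let (y_i) satisfy |y_i| ≤ M i!/R^i, let 0 < R' < R, s > 1, and define y(t) = φ_s((t-t₁)/R') · ∑_{i≥0} y_i (t-t₁)^i/i! on [t₁, t₁+R']. Then y is C^∞ with y^(i)(t₁) = y_i and y^(i)(t₁+R') = 0 for all i ≥ 0. -/

import Mathlib

/-!
The function `x ↦ exp (-x ^ (-k))` on `x > 0` is flat at `0`: its derivatives are combinations of
`x ^ a * exp (-x ^ (-k))`, which tend to `0` with `x` for every real `a`. Extended by zero it is
therefore smooth, and so is the step function built from it. The analytic factor is smooth on
`|t - t₁| < R`, so `y` is smooth at both ends of `[t₁, t₁ + R']`. Derivatives of a smooth function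
can be computed from one side: to the left of `t₁` the product is the power series, and to the
right of `t₁ + R'` it is zero.
-/

open Filter Set
open scoped ContDiff Topology

section FlatExp

variable {k : ℝ}

/-- The flat function `exp (-x ^ (-k))` on `x > 0` with a weight `x ^ a`, extended by zero. The
weight makes the family stable under differentiation. -/
noncomputable def flatExp (k a x : ℝ) : ℝ :=
  if 0 < x then x ^ a * Real.exp (-x ^ (-k)) else 0

lemma flatExp_of_pos {a x : ℝ} (hx : 0 < x) :
    flatExp k a x = x ^ a * Real.exp (-x ^ (-k)) :=
  if_pos hx

lemma flatExp_of_nonpos {a x : ℝ} (hx : x ≤ 0) : flatExp k a x = 0 :=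
  if_neg hx.not_gt

lemma flatExp_pos {a x : ℝ} (hx : 0 < x) : 0 < flatExp k a x := by
  rw [flatExp_of_pos hx]
  positivity

lemma flatExp_nonneg (a x : ℝ) : 0 ≤ flatExp k a x := by
  rcases le_or_gt x 0 with hx | hx
  · exact (flatExp_of_nonpos hx).ge
  · exact (flatExp_pos hx).le

lemma tendsto_rpow_mul_exp_neg_rpow_neg_nhdsGT_zero (hk : 0 < k) (a : ℝ) :
    Tendsto (fun x : ℝ => x ^ a * Real.exp (-x ^ (-k))) (𝓝[>] 0) (𝓝 0) := by
  have inv_atTop : Tendsto (fun x : ℝ => x ^ (-k)) (𝓝[>] 0) atTop :=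
    tendsto_rpow_neg_nhdsGT_zero (neg_neg_of_pos hk)
  refine ((tendsto_rpow_mul_exp_neg_mul_atTop_nhds_zero (-a / k) 1 one_pos).comp
    inv_atTop).congr' ?_
  filter_upwards [self_mem_nhdsWithin] with x (hx : 0 < x)
  have exponent : -k * (-a / k) = a := by field_simp
  simp only [Function.comp_apply, ← Real.rpow_mul hx.le, exponent, neg_one_mul]

lemma hasDerivAt_flatExp_of_pos (a : ℝ) {x : ℝ} (hx : 0 < x) :
    HasDerivAt (flatExp k a) (a * flatExp k (a - 1) x + k * flatExp k (a - k - 1) x) x := by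
  have eventually_pos : flatExp k a =ᶠ[𝓝 x] fun z => z ^ a * Real.exp (-z ^ (-k)) := by
    filter_upwards [Ioi_mem_nhds hx] with z hz using flatExp_of_pos hz
  have deriv_rpow := Real.hasDerivAt_rpow_const (p := a) (Or.inl hx.ne')
  have deriv_exp := (Real.hasDerivAt_rpow_const (p := -k) (Or.inl hx.ne')).fun_neg.exp
  refine ((deriv_rpow.mul deriv_exp).congr_of_eventuallyEq eventually_pos).congr_deriv ?_
  have split_rpow : x ^ (a - k - 1) = x ^ a * x ^ (-k - 1) := by
    rw [← Real.rpow_add hx]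
    ring_nf
  rw [flatExp_of_pos hx, flatExp_of_pos hx, split_rpow]
  ring

lemma hasDerivAt_flatExp_zero (hk : 0 < k) (a : ℝ) : HasDerivAt (flatExp k a) 0 0 := by
  refine hasDerivAt_iff_tendsto_slope_left_right.2 ⟨tendsto_const_nhds.congr' ?_,
    (tendsto_rpow_mul_exp_neg_rpow_neg_nhdsGT_zero hk (a - 1)).congr' ?_⟩
  · filter_upwards [self_mem_nhdsWithin] with z (hz : z < 0)
    simp [slope_def_field, flatExp_of_nonpos, hz.le]
  · filter_upwards [self_mem_nhdsWithin] with z (hz : 0 < z)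
    rw [slope_def_field, flatExp_of_pos hz, flatExp_of_nonpos le_rfl, Real.rpow_sub_one hz.ne']
    ring

lemma hasDerivAt_flatExp (hk : 0 < k) (a x : ℝ) :
    HasDerivAt (flatExp k a) (a * flatExp k (a - 1) x + k * flatExp k (a - k - 1) x) x := by
  rcases lt_or_ge 0 x with hx | hx
  · exact hasDerivAt_flatExp_of_pos a hx
  · simp only [flatExp_of_nonpos hx, mul_zero, add_zero]
    rcases hx.lt_or_eq with hx | rfl
    · refine (hasDerivAt_const x (0 : ℝ)).congr_of_eventuallyEq ?_
      filter_upwards [Iio_mem_nhds hx] with z hz using flatExp_of_nonpos (le_of_lt hz)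
    · exact hasDerivAt_flatExp_zero hk a

lemma contDiff_flatExp (hk : 0 < k) (a : ℝ) : ContDiff ℝ ∞ (flatExp k a) := by
  have differentiable (b : ℝ) : Differentiable ℝ (flatExp k b) :=
    fun x => (hasDerivAt_flatExp hk b x).differentiableAt
  refine contDiff_infty.2 fun n => ?_
  induction n generalizing a with
  | zero => exact contDiff_zero.2 (differentiable a).continuous
  | succ n ih =>
    have deriv_eq : deriv (flatExp k a) =
        fun x => a * flatExp k (a - 1) x + k * flatExp k (a - k - 1) x :=
      funext fun x => (hasDerivAt_flatExp hk a x).deriv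
    push_cast
    refine contDiff_succ_iff_deriv.2 ⟨differentiable a, by simp, ?_⟩
    rw [deriv_eq]
    exact (contDiff_const.mul (ih _)).add (contDiff_const.mul (ih _))

end FlatExp

section SmoothStep

/-- A smooth step function: smooth on `ℝ`, equal to `1` up to `0` and to `0` from `1` on. Its
derivatives of positive order thus vanish at both ends of `[0, 1]`. -/
structure IsSmoothStep (φ : ℝ → ℝ) : Prop where
  contDiff : ContDiff ℝ ∞ φ
  eq_one_of_nonpos {t : ℝ} : t ≤ 0 → φ t = 1
  eq_zero_of_one_le {t : ℝ} : 1 ≤ t → φ t = 0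

/-- The Gevrey step function `φ_s` of order `s = 1 + 1 / k`. -/
noncomputable def gevreyStep (k t : ℝ) : ℝ :=
  flatExp k 0 (1 - t) / (flatExp k 0 (1 - t) + flatExp k 0 t)

variable {k : ℝ}

lemma flatExp_one_sub_add_pos (t : ℝ) : 0 < flatExp k 0 (1 - t) + flatExp k 0 t := by
  rcases lt_or_ge 0 t with ht | ht
  · exact add_pos_of_nonneg_of_pos (flatExp_nonneg _ _) (flatExp_pos ht)
  · exact add_pos_of_pos_of_nonneg (flatExp_pos (by linarith)) (flatExp_nonneg _ _)

lemma isSmoothStep_gevreyStep (hk : 0 < k) : IsSmoothStep (gevreyStep k) where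
  contDiff := by
    have smooth := contDiff_flatExp hk 0
    have smooth_reflected : ContDiff ℝ ∞ fun t => flatExp k 0 (1 - t) :=
      smooth.comp (contDiff_const.sub contDiff_id)
    exact smooth_reflected.div (smooth_reflected.add smooth)
      fun t => (flatExp_one_sub_add_pos t).ne'
  eq_one_of_nonpos {t} ht := by
    have pos : 0 < flatExp k 0 (1 - t) := flatExp_pos (by linarith)
    rw [gevreyStep, flatExp_of_nonpos ht, add_zero, div_self pos.ne']
  eq_zero_of_one_le {t} ht := by
    rw [gevreyStep, flatExp_of_nonpos (by linarith), zero_div]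

lemma gevreyStep_eq_ite (hk : 0 < k) (t : ℝ) :
    gevreyStep k t = if t ≤ 0 then 1 else if 1 ≤ t then 0 else
      Real.exp (-(1 - t) ^ (-k)) /
        (Real.exp (-(1 - t) ^ (-k)) + Real.exp (-t ^ (-k))) := by
  split_ifs with h₀ h₁
  · exact (isSmoothStep_gevreyStep hk).eq_one_of_nonpos h₀
  · exact (isSmoothStep_gevreyStep hk).eq_zero_of_one_le h₁
  · rw [gevreyStep, flatExp_of_pos (sub_pos.2 (not_le.1 h₁)), flatExp_of_pos (not_le.1 h₀)]
    simp only [Real.rpow_zero, one_mul]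

end SmoothStep

section PrescribedDerivatives

variable {𝕜 E : Type*} [RCLike 𝕜] [NormedAddCommGroup E] [NormedSpace 𝕜 E]

/-- The formal power series `∑ zⁿ / n! • aₙ`, whose sum has derivatives `aₙ` at the center. -/
noncomputable def seriesOfDerivs (𝕜 : Type*) [RCLike 𝕜] [NormedSpace 𝕜 E] (a : ℕ → E) :
    FormalMultilinearSeries 𝕜 𝕜 E :=
  fun n => ContinuousMultilinearMap.mkPiRing 𝕜 (Fin n) ((n.factorial : 𝕜)⁻¹ • a n)

lemma seriesOfDerivs_apply_const (a : ℕ → E) (n : ℕ) (z : 𝕜) :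
    seriesOfDerivs 𝕜 a n (fun _ => z) = (z ^ n / n.factorial) • a n := by
  simp [seriesOfDerivs, smul_smul, div_eq_mul_inv]

lemma ofReal_le_radius_seriesOfDerivs {a : ℕ → E} {M R : ℝ} (hR : 0 < R)
    (ha : ∀ n, ‖a n‖ ≤ M * n.factorial / R ^ n) :
    ENNReal.ofReal R ≤ (seriesOfDerivs 𝕜 a).radius := by
  refine (seriesOfDerivs 𝕜 a).le_radius_of_bound M fun n => ?_
  rw [seriesOfDerivs, ContinuousMultilinearMap.norm_mkPiRing, norm_smul, norm_inv,
    RCLike.norm_natCast, Real.coe_toNNReal _ hR.le]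
  calc (n.factorial : ℝ)⁻¹ * ‖a n‖ * R ^ n
      ≤ (n.factorial : ℝ)⁻¹ * (M * n.factorial / R ^ n) * R ^ n := by gcongr; exact ha n
    _ = M := by field_simp

lemma hasFPowerSeriesOnBall_tsum_pow_div_factorial_smul [CompleteSpace E] {a : ℕ → E} {M R : ℝ}
    (hR : 0 < R) (ha : ∀ n, ‖a n‖ ≤ M * n.factorial / R ^ n) (c : 𝕜) :
    HasFPowerSeriesOnBall (fun z => ∑' n, ((z - c) ^ n / n.factorial) • a n)
      (seriesOfDerivs 𝕜 a) c (ENNReal.ofReal R) := by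
  have radius_ge := ofReal_le_radius_seriesOfDerivs (𝕜 := 𝕜) hR ha
  have R_pos : 0 < ENNReal.ofReal R := ENNReal.ofReal_pos.2 hR
  have sum_series := (((seriesOfDerivs 𝕜 a).hasFPowerSeriesOnBall
    (R_pos.trans_le radius_ge)).mono R_pos radius_ge).comp_sub c
  simpa only [zero_add, FormalMultilinearSeries.sum, seriesOfDerivs_apply_const] using sum_series

lemma iteratedDeriv_eq_of_hasFPowerSeriesOnBall_seriesOfDerivs [CompleteSpace E] {f : 𝕜 → E}
    {a : ℕ → E} {c : 𝕜} {r : ENNReal} (hf : HasFPowerSeriesOnBall f (seriesOfDerivs 𝕜 a) c r)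
    (n : ℕ) : iteratedDeriv n f c = a n := by
  have factorial_ne_zero : (n.factorial : 𝕜) ≠ 0 := Nat.cast_ne_zero.2 n.factorial_ne_zero
  rw [iteratedDeriv_eq_iteratedFDeriv, ← hf.factorial_smul 1 n, seriesOfDerivs_apply_const,
    one_pow, ← Nat.cast_smul_eq_nsmul 𝕜, smul_smul, mul_one_div_cancel factorial_ne_zero, one_smul]

end PrescribedDerivatives

lemma iteratedDeriv_eq_of_eqOn {𝕜 F : Type*} [NontriviallyNormedField 𝕜] [NormedAddCommGroup F]
    [NormedSpace 𝕜 F] {f g : 𝕜 → F} {s : Set 𝕜} {x : 𝕜} {n : ℕ} (hs : UniqueDiffOn 𝕜 s)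
    (hx : x ∈ s) (hf : ContDiffAt 𝕜 n f x) (hg : ContDiffAt 𝕜 n g x) (h : EqOn f g s) :
    iteratedDeriv n f x = iteratedDeriv n g x := by
  rw [← iteratedDerivWithin_eq_iteratedDeriv hs hf hx,
    ← iteratedDerivWithin_eq_iteratedDeriv hs hg hx, iteratedDerivWithin_congr h hx]

namespace IsSmoothStep

variable {E : Type*} [NormedAddCommGroup E] [NormedSpace ℝ E] {φ : ℝ → ℝ} {f : ℝ → E} {c L : ℝ}

lemma contDiffAt_smul (hφ : IsSmoothStep φ) {n : ℕ∞} {t : ℝ} (hf : ContDiffAt ℝ n f t) :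
    ContDiffAt ℝ n (fun t => φ ((t - c) / L) • f t) t := by
  have rescaled : ContDiff ℝ ∞ fun t => φ ((t - c) / L) :=
    hφ.contDiff.comp ((contDiff_id.sub contDiff_const).div_const L)
  exact (rescaled.contDiffAt.of_le (mod_cast le_top)).smul hf

lemma iteratedDeriv_smul_left (hφ : IsSmoothStep φ) (hL : 0 < L) {n : ℕ}
    (hf : ContDiffAt ℝ n f c) :
    iteratedDeriv n (fun t => φ ((t - c) / L) • f t) c = iteratedDeriv n f c := by
  refine iteratedDeriv_eq_of_eqOn (uniqueDiffOn_Iic c) self_mem_Iic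
    (hφ.contDiffAt_smul hf) hf fun t ht => ?_
  have step_eq_one : φ ((t - c) / L) = 1 :=
    hφ.eq_one_of_nonpos (div_nonpos_of_nonpos_of_nonneg (sub_nonpos.2 ht) hL.le)
  simp only [step_eq_one, one_smul]

lemma iteratedDeriv_smul_right (hφ : IsSmoothStep φ) (hL : 0 < L) {n : ℕ}
    (hf : ContDiffAt ℝ n f (c + L)) :
    iteratedDeriv n (fun t => φ ((t - c) / L) • f t) (c + L) = 0 := by
  have eqOn_zero : EqOn (fun t => φ ((t - c) / L) • f t) (fun _ => 0) (Ici (c + L)) := by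
    intro t ht
    have step_eq_zero : φ ((t - c) / L) = 0 :=
      hφ.eq_zero_of_one_le ((one_le_div hL).2 (le_sub_iff_add_le'.2 ht))
    simp only [step_eq_zero, zero_smul]
  rw [iteratedDeriv_eq_of_eqOn (uniqueDiffOn_Ici _) self_mem_Ici
    (hφ.contDiffAt_smul hf) contDiffAt_const eqOn_zero, iteratedDeriv_fun_const_zero]

end IsSmoothStep

theorem flat_output_boundary_values_general {E : Type*} [NormedAddCommGroup E] [NormedSpace ℝ E]
    [CompleteSpace E] {M R R' t₁ : ℝ} (hR' : 0 < R') (hRR : R' < R)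
    {φ : ℝ → ℝ} (hφ : IsSmoothStep φ)
    {ys : ℕ → E} (hys : ∀ i, ‖ys i‖ ≤ M * i.factorial / R ^ i)
    {y : ℝ → E}
    (hy : ∀ t, y t = φ ((t - t₁) / R') • ∑' i : ℕ, ((t - t₁) ^ i / i.factorial) • ys i) :
    ContDiffOn ℝ ∞ y (Icc t₁ (t₁ + R')) ∧
    (∀ i, iteratedDeriv i y t₁ = ys i) ∧
    (∀ i, iteratedDeriv i y (t₁ + R') = 0) := by
  have hR : 0 < R := hR'.trans hRR
  have series := hasFPowerSeriesOnBall_tsum_pow_div_factorial_smul hR hys t₁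
  have smooth : ∀ t ∈ Icc t₁ (t₁ + R'), ∀ {n : ℕ∞},
      ContDiffAt ℝ n (fun t => ∑' i : ℕ, ((t - t₁) ^ i / i.factorial) • ys i) t := by
    refine fun t ht {n} => (series.analyticAt_of_mem ?_).contDiffAt
    rw [Metric.mem_eball, edist_dist, ENNReal.ofReal_lt_ofReal_iff hR, Real.dist_eq,
      abs_of_nonneg (sub_nonneg.2 ht.1)]
    linarith [ht.2]
  have left_mem : t₁ ∈ Icc t₁ (t₁ + R') := left_mem_Icc.2 (by linarith)
  have right_mem : t₁ + R' ∈ Icc t₁ (t₁ + R') := right_mem_Icc.2 (by linarith)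
  obtain rfl := funext hy
  refine ⟨fun t ht => (hφ.contDiffAt_smul (smooth t ht)).contDiffWithinAt, fun i => ?_,
    fun i => hφ.iteratedDeriv_smul_right hR' (smooth _ right_mem)⟩
  rw [hφ.iteratedDeriv_smul_left hR' (smooth _ left_mem),
    iteratedDeriv_eq_of_hasFPowerSeriesOnBall_seriesOfDerivs series]

theorem flat_output_boundary_values (s k M R R' t₁ : ℝ) (hs : 1 < s) (hk : k = 1 / (s - 1))
    (hM : 0 < M) (hR' : 0 < R') (hRR : R' < R)
    (φ : ℝ → ℝ)
    (hφ : ∀ t : ℝ, φ t = if t ≤ 0 then 1 else if 1 ≤ t then 0 else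
      Real.exp (-(1 - t) ^ (-k)) /
        (Real.exp (-(1 - t) ^ (-k)) + Real.exp (-t ^ (-k))))
    (ys : ℕ → ℝ) (hys : ∀ i : ℕ, |ys i| ≤ M * (i.factorial : ℝ) / R ^ i)
    (y : ℝ → ℝ)
    (hy : ∀ t : ℝ, y t = φ ((t - t₁) / R') *
      ∑' i : ℕ, ys i * (t - t₁) ^ i / (i.factorial : ℝ)) :
    ContDiffOn ℝ (⊤ : ℕ∞) y (Set.Icc t₁ (t₁ + R')) ∧
    (∀ i : ℕ, iteratedDeriv i y t₁ = ys i) ∧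
    (∀ i : ℕ, iteratedDeriv i y (t₁ + R') = 0) := by
  have k_pos : 0 < k := hk ▸ one_div_pos.2 (sub_pos.2 hs)
  obtain rfl : φ = gevreyStep k := funext fun t => (hφ t).trans (gevreyStep_eq_ite k_pos t).symm
  exact flat_output_boundary_values_general hR' hRR (isSmoothStep_gevreyStep k_pos) hys
    (by simpa only [smul_eq_mul, mul_comm, mul_div_assoc] using hy)
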